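/- Fix 1 ≤ p < ∞ and let w(i) = (w_n(i))_{n≥1}, i ∈ ℕ, be countably many bounded sequences of nonzero scalars, so that every weighted backward shift B_{w(i)} is a bounded operator on ℓ^p(ℕ). Assume there exist a sequence ω = (ω_n)_{n≥1} of nonzero scalars, constants M ≥ 1 and 0 < η ≤ 1 with either M = η = 1 or (M ≠ 1 and η ≠ 1), and a constant C > 0, such that for every i ∈ ℕ, n ≥ 1 and m ≥ 1: (i) ∑_{k≥1} |ω_1 ⋯ ω_k|^{−p} < ∞; (ii) |ω_n ⋯ ω_{n+m}| ≤ C η^m |w_n(i) ⋯ w_{n+m}(i)|; (iii) C^{−1} M^{−m} ≤ |w_n(i) ⋯ w_{n+m}(i)| ≤ C M^m. Then there exists a common frequently hypercyclic vector for the family (B_{w(i)})_{i∈ℕ}. -/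

import Mathlib

open Filter Topology
open scoped ENNReal NNReal

/-- Lower density of a set of natural numbers. -/
noncomputable def lowerDensity (E : Set ℕ) : ℝ :=
  Filter.liminf (fun n : ℕ =>
    (∑ k ∈ Finset.range (n + 1), Set.indicator E (fun _ => (1 : ℝ)) k) / ((n : ℝ) + 1))
    Filter.atTop

/-!
Let `S j` be the formal right inverse of the shift of weights `w j`. The common vector is a sum of
preimages `S j ^ m (y s)` of finitely supported words `y s`, where `j` is the index attached to `s`,
each pair of an index and a word being listed infinitely often, and `m` runs through a set `A s` of
positive lower density.

Hypotheses (ii) and (iii), with `κ` such that `η ^ κ * M ^ 2 ≤ 1`, show that moving the basis vector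
`e_t` to the coordinate `u` by `m` steps of `S j` and `n` steps of the shift of weights `w i` costs
at most a constant times `Ω t / Ω u`, where `Ω k` is the absolute value of `ω 1 ⋯ ω k`, as soon as
`m - n ≥ κ n` or `i = j`. So the sets `A s` are chosen such that times in different sets are
separated proportionally to their size, while within one set a fixed gap is enough.

All words lie in disjoint windows, so the errors can be bounded coordinate by coordinate. The
sequence `Ω u ^ (-p)` remains summable after multiplication by some `h u ^ p` with `h` tending to
infinity, and `h` absorbs the coefficients of the words; the error at a time in `A s` is then a tail
of the convergent series of `(h u / Ω u) ^ p`.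
-/

section LowerDensity

theorem sum_indicator_one_eq_card (E : Set ℕ) [DecidablePred (· ∈ E)] (n : ℕ) :
    ∑ k ∈ Finset.range n, E.indicator (fun _ => (1 : ℝ)) k =
      ((Finset.range n).filter (· ∈ E)).card := by
  simp [Set.indicator_apply, Finset.sum_boole]

theorem card_filter_range_div_le_one (E : Set ℕ) [DecidablePred (· ∈ E)] (n : ℕ) :
    (((Finset.range (n + 1)).filter (· ∈ E)).card : ℝ) / (n + 1) ≤ 1 := by
  rw [div_le_one (by positivity)]
  exact_mod_cast (Finset.card_filter_le _ _).trans (Finset.card_range _).le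

theorem lowerDensity_pos_of_card_le {E : Set ℕ} {c : ℝ} (hc : 0 < c)
    (h : ∀ᶠ n : ℕ in atTop, ∃ F ⊆ Finset.range (n + 1), ↑F ⊆ E ∧ c * (n + 1) ≤ F.card) :
    0 < lowerDensity E := by
  classical
  simp only [lowerDensity, sum_indicator_one_eq_card]
  refine hc.trans_le (le_liminf_of_le
    (isBoundedUnder_of ⟨1, card_filter_range_div_le_one E⟩).isCoboundedUnder_ge ?_)
  filter_upwards [h] with n ⟨F, hFn, hFE, hcard⟩
  rw [le_div_iff₀ (by positivity)]
  refine hcard.trans (Nat.cast_le.2 (Finset.card_le_card fun k hk => ?_))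
  exact Finset.mem_filter.2 ⟨hFn hk, hFE hk⟩

theorem lowerDensity_mono {A E : Set ℕ} (hAE : A ⊆ E) : lowerDensity A ≤ lowerDensity E := by
  classical
  simp only [lowerDensity, sum_indicator_one_eq_card]
  refine liminf_le_liminf (Eventually.of_forall fun n => ?_)
    (isBoundedUnder_of ⟨0, fun n => by positivity⟩)
    (isBoundedUnder_of ⟨1, card_filter_range_div_le_one E⟩).isCoboundedUnder_ge
  gcongr

end LowerDensity

section WellSeparated

/-- The separation of the sets of return times: two elements of `⋃ s, A s` are at distance at least
the parameters `N` of the sets they come from, and the gap above `n` is at least `κ * n` when the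
next element belongs to another set. -/
structure WellSeparated (N : ℕ → ℕ) (κ : ℕ) (A : ℕ → Set ℕ) : Prop where
  le_of_mem : ∀ {s n}, n ∈ A s → N s ≤ n
  index_eq : ∀ {r s n}, n ∈ A r → n ∈ A s → r = s
  add_max_le : ∀ {r s n m}, n ∈ A r → m ∈ A s → n < m → n + max (N r) (N s) ≤ m
  add_mul_le : ∀ {r s n m}, n ∈ A r → m ∈ A s → n < m → r ≠ s → n + κ * n ≤ m

/-- The multiples of `N s` lying in the blocks `[a ^ k, 2 * a ^ k]` of colour `s`. The colour of the
`k`-th block is the `2`-adic valuation of `k`, so that every colour recurs with bounded gaps. -/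
def blockSet (a : ℕ) (N : ℕ → ℕ) (s : ℕ) : Set ℕ :=
  {n | N s ∣ n ∧ ∃ k, padicValNat 2 k = s ∧ 2 * N s ≤ a ^ k ∧ a ^ k ≤ n ∧ n ≤ 2 * a ^ k}

theorem mul_pow_le_pow_of_lt {b a k l : ℕ} (ha : 0 < a) (hb : b ≤ a) (hkl : k < l) :
    b * a ^ k ≤ a ^ l :=
  calc b * a ^ k ≤ a * a ^ k := Nat.mul_le_mul_right _ hb
    _ = a ^ (k + 1) := (pow_succ' a k).symm
    _ ≤ a ^ l := Nat.pow_le_pow_right ha hkl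

theorem wellSeparated_blockSet {a κ : ℕ} (N : ℕ → ℕ) (ha : 4 ≤ a) (haκ : 2 * κ + 2 ≤ a) :
    WellSeparated N κ (blockSet a N) := by
  have block_lt_imp {k l : ℕ} (hkl : k < l) : 0 < a ^ k ∧ 4 * a ^ k ≤ a ^ l :=
    ⟨by positivity, mul_pow_le_pow_of_lt (by omega) ha hkl⟩
  have block_le {k l n m : ℕ} (hn : a ^ k ≤ n) (hm : m ≤ 2 * a ^ l) (hnm : n ≤ m) : k ≤ l := by
    by_contra! hlk
    have := block_lt_imp hlk
    omega
  refine ⟨?_, ?_, ?_, ?_⟩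
  · rintro s n ⟨-, k, -, hN, hkn, -⟩
    omega
  · rintro r s n ⟨-, k, rfl, -, hkn, hnk⟩ ⟨-, l, rfl, -, hln, hnl⟩
    rw [(block_le hkn hnl le_rfl).antisymm (block_le hln hnk le_rfl)]
  · rintro r s n m ⟨hn, k, rfl, hNk, hkn, hnk⟩ ⟨hm, l, rfl, hNl, hlm, hml⟩ hnm
    rcases (block_le hkn hml hnm.le).lt_or_eq with hkl | rfl
    · have := block_lt_imp hkl
      omega
    · have := Nat.le_of_dvd (Nat.sub_pos_of_lt hnm) (Nat.dvd_sub hm hn)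
      omega
  · rintro r s n m ⟨-, k, rfl, -, hkn, hnk⟩ ⟨-, l, rfl, -, hlm, hml⟩ hnm hrs
    rcases (block_le hkn hml hnm.le).lt_or_eq with hkl | rfl
    · calc n + κ * n = (κ + 1) * n := by ring
        _ ≤ (κ + 1) * (2 * a ^ k) := Nat.mul_le_mul_left _ hnk
        _ = (2 * κ + 2) * a ^ k := by ring
        _ ≤ a ^ l := mul_pow_le_pow_of_lt (by omega) haκ hkl
        _ ≤ m := hlm
    · exact absurd rfl hrs

theorem exists_padicValNat_two_eq (s L : ℕ) (hL : 2 ^ s ≤ L) :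
    ∃ k, padicValNat 2 k = s ∧ k ≤ L ∧ L < k + 2 ^ (s + 1) := by
  set l := (L - 2 ^ s) / 2 ^ (s + 1)
  have hk : 2 ^ s * (2 * l + 1) = 2 ^ (s + 1) * l + 2 ^ s := by ring
  have hdiv : 2 ^ (s + 1) * l + (L - 2 ^ s) % 2 ^ (s + 1) = L - 2 ^ s := Nat.div_add_mod _ _
  refine ⟨2 ^ s * (2 * l + 1), ?_, by omega, by omega⟩
  rw [padicValNat.mul (by positivity) (by omega), padicValNat.prime_pow,
    padicValNat.eq_zero_of_not_dvd (by omega), add_zero]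

theorem exists_block_of_le {a s b n : ℕ} (ha : 2 ≤ a) (hn : a ^ (b + 2 ^ (s + 1) + 1) ≤ n) :
    ∃ k, padicValNat 2 k = s ∧ b ≤ k ∧ a ^ (k + 1) ≤ n ∧ n < a ^ (k + (2 ^ (s + 1) + 1)) := by
  have hn0 : n ≠ 0 := ((Nat.pow_pos (by omega)).trans_le hn).ne'
  have hlog : b + 2 ^ (s + 1) + 1 ≤ Nat.log a n := Nat.le_log_of_pow_le (by omega) hn
  have hpow : 2 ^ s ≤ 2 ^ (s + 1) := Nat.pow_le_pow_right two_pos s.le_succ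
  obtain ⟨k, hks, hkL, hLk⟩ := exists_padicValNat_two_eq s (Nat.log a n - 1) (by omega)
  refine ⟨k, hks, by omega, ?_, ?_⟩
  · exact (Nat.pow_le_pow_right (by omega) (by omega)).trans (Nat.pow_log_le_self a hn0)
  · exact (Nat.lt_pow_succ_log_self ha n).trans_le (Nat.pow_le_pow_right (by omega) (by omega))

theorem exists_finset_subset_blockSet {a s k : ℕ} {N : ℕ → ℕ} (hN : 0 < N s)
    (hk : padicValNat 2 k = s) (hNk : 2 * N s ≤ a ^ k) :
    ∃ F ⊆ Finset.range (2 * a ^ k + 1), ↑F ⊆ blockSet a N s ∧ a ^ k ≤ 2 * N s * F.card := by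
  set J := a ^ k / N s
  have hdiv : N s * J + a ^ k % N s = a ^ k := Nat.div_add_mod _ _
  have hmod : a ^ k % N s < N s := Nat.mod_lt _ hN
  have hbounds : ∀ j ∈ Finset.Ioc J (2 * J), a ^ k ≤ N s * j ∧ N s * j ≤ 2 * a ^ k := by
    intro j hj
    obtain ⟨hJj, hj2J⟩ := Finset.mem_Ioc.1 hj
    have hlow : N s * (J + 1) ≤ N s * j := Nat.mul_le_mul_left _ hJj
    have hup : N s * j ≤ N s * (2 * J) := Nat.mul_le_mul_left _ hj2J
    rw [mul_add_one] at hlow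
    rw [mul_left_comm] at hup
    omega
  refine ⟨(Finset.Ioc J (2 * J)).image (N s * ·), ?_, ?_, ?_⟩
  · refine Finset.image_subset_iff.2 fun j hj => Finset.mem_range.2 ?_
    exact Nat.lt_succ_of_le (hbounds j hj).2
  · rw [Finset.coe_image]
    rintro _ ⟨j, hj, rfl⟩
    exact ⟨dvd_mul_right _ _, k, hk, hNk, hbounds j hj⟩
  · rw [Finset.card_image_of_injective _ (mul_right_injective₀ hN.ne'), Nat.card_Ioc,
      two_mul J, Nat.add_sub_cancel, mul_assoc]
    omega

theorem lowerDensity_blockSet_pos {a s : ℕ} {N : ℕ → ℕ} (ha : 2 ≤ a) (hN : 0 < N s) :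
    0 < lowerDensity (blockSet a N s) := by
  set P := 2 ^ (s + 1) + 1
  have hc : (0 : ℝ) < 2 * N s * (a : ℝ) ^ P := by
    have : (0 : ℝ) < N s := Nat.cast_pos.2 hN
    positivity
  refine lowerDensity_pos_of_card_le (inv_pos.2 hc) ?_
  filter_upwards [eventually_ge_atTop (a ^ (2 * N s + P))] with n hn
  obtain ⟨k, hks, hNk, hkn, hnk⟩ := exists_block_of_le (s := s) (b := 2 * N s) ha hn
  obtain ⟨F, hF, hFA, hcard⟩ :=
    exists_finset_subset_blockSet hN hks (hNk.trans (Nat.lt_pow_self ha).le)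
  have h2k : 2 * a ^ k ≤ n := (mul_pow_le_pow_of_lt (by omega) ha k.lt_succ_self).trans hkn
  refine ⟨F, hF.trans (Finset.range_mono (by omega)), hFA, ?_⟩
  have hcount : n + 1 ≤ 2 * N s * a ^ P * F.card :=
    calc n + 1 ≤ a ^ (k + P) := hnk
      _ = a ^ k * a ^ P := pow_add _ _ _
      _ ≤ 2 * N s * F.card * a ^ P := Nat.mul_le_mul_right _ hcard
      _ = 2 * N s * a ^ P * F.card := by ring
  rw [inv_mul_le_iff₀ hc]
  exact_mod_cast hcount

theorem exists_wellSeparated_lowerDensity_pos (κ : ℕ) {N : ℕ → ℕ} (hN : ∀ s, 0 < N s) :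
    ∃ A : ℕ → Set ℕ, WellSeparated N κ A ∧ ∀ s, 0 < lowerDensity (A s) :=
  ⟨blockSet (2 * κ + 4) N, wellSeparated_blockSet N (by omega) (by omega),
    fun s => lowerDensity_blockSet_pos (by omega) (hN s)⟩

end WellSeparated

section FrequentHypercyclicity

/-- The set `FHC(T)` of frequently hypercyclic vectors of `T`. -/
def frequentlyHypercyclicVectors {R X : Type*} [Semiring R] [TopologicalSpace X]
    [AddCommMonoid X] [Module R X] (T : X →L[R] X) : Set X :=
  {x | ∀ U : Set X, IsOpen U → U.Nonempty → 0 < lowerDensity {n : ℕ | (T ^ n) x ∈ U}}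

theorem mem_frequentlyHypercyclicVectors_of_dense {R X : Type*} [Semiring R] [PseudoMetricSpace X]
    [AddCommMonoid X] [Module R X] {T : X →L[R] X} {x : X} {D : Set X} (hD : Dense D)
    (h : ∀ z ∈ D, ∀ ε > 0, ∃ A : Set ℕ, 0 < lowerDensity A ∧ ∀ n ∈ A, dist ((T ^ n) x) z < ε) :
    x ∈ frequentlyHypercyclicVectors T := by
  intro U hU hU_nonempty
  obtain ⟨z, hzD, hzU⟩ := hD.exists_mem_open hU hU_nonempty
  obtain ⟨ε, hε, hball⟩ := Metric.isOpen_iff.1 hU z hzU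
  obtain ⟨A, hA, hdist⟩ := h z hzD ε hε
  exact hA.trans_le (lowerDensity_mono fun n hn => hball (hdist n hn))

end FrequentHypercyclicity

section SlowGrowth

theorem inv_sqrt_mul_sub_le {x y : ℝ} (hx : 0 < x) (hy : 0 ≤ y) (hyx : y ≤ x) :
    (√x)⁻¹ * (x - y) ≤ 2 * (√x - √y) := by
  have hsqrt : √y ≤ √x := Real.sqrt_le_sqrt hyx
  have hfactor : x - y = (√x + √y) * (√x - √y) := by
    rw [← sq_sub_sq, Real.sq_sqrt hx.le, Real.sq_sqrt hy]
  rw [inv_mul_le_iff₀ (Real.sqrt_pos.2 hx), hfactor]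
  nlinarith

theorem exists_monotone_tendsto_atTop_summable_mul_of_pos {a : ℕ → ℝ} (ha : ∀ n, 0 < a n)
    (hs : Summable a) :
    ∃ h : ℕ → ℝ, Monotone h ∧ Tendsto h atTop atTop ∧ (∀ n, 0 ≤ h n) ∧
      Summable fun n => h n * a n := by
  set R : ℕ → ℝ := fun n => ∑' k, a (k + n)
  have hR_pos (n : ℕ) : 0 < R n :=
    ((summable_nat_add_iff n).2 hs).tsum_pos (fun k => (ha _).le) 0 (ha _)
  have hR_sub (n : ℕ) : a n = R n - R (n + 1) := by
    have hsplit := ((summable_nat_add_iff n).2 hs).tsum_eq_zero_add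
    simp only [zero_add, add_right_comm _ 1 n, add_assoc] at hsplit
    exact eq_sub_of_add_eq hsplit.symm
  have hR_anti : Antitone R := antitone_nat_of_succ_le fun n => by linarith [hR_sub n, ha n]
  have hR_lim : Tendsto (fun n => √(R n)) atTop (𝓝[>] 0) := by
    refine tendsto_nhdsWithin_iff.2 ⟨?_, Eventually.of_forall fun n => Real.sqrt_pos.2 (hR_pos n)⟩
    simpa using (tendsto_sum_nat_add a).sqrt
  refine ⟨fun n => (√(R n))⁻¹, fun m n hmn => ?_, tendsto_inv_nhdsGT_zero.comp hR_lim,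
    fun n => by positivity, ?_⟩
  · exact inv_anti₀ (Real.sqrt_pos.2 (hR_pos n)) (Real.sqrt_le_sqrt (hR_anti hmn))
  refine summable_of_sum_range_le (c := 2 * √(R 0))
    (fun n => mul_nonneg (by positivity) (ha n).le) fun n => ?_
  calc ∑ i ∈ Finset.range n, (√(R i))⁻¹ * a i
      ≤ ∑ i ∈ Finset.range n, 2 * (√(R i) - √(R (i + 1))) := by
        refine Finset.sum_le_sum fun i _ => ?_
        rw [hR_sub i]
        exact inv_sqrt_mul_sub_le (hR_pos i) (hR_pos _).le (hR_anti i.le_succ)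
    _ = 2 * (√(R 0) - √(R n)) := by rw [← Finset.mul_sum, Finset.sum_range_sub']
    _ ≤ 2 * √(R 0) := by linarith [Real.sqrt_nonneg (R n)]

theorem exists_monotone_tendsto_atTop_summable_mul {a : ℕ → ℝ} (ha : ∀ n, 0 ≤ a n)
    (hs : Summable a) :
    ∃ h : ℕ → ℝ, Monotone h ∧ Tendsto h atTop atTop ∧ (∀ n, 0 ≤ h n) ∧
      Summable fun n => h n * a n := by
  obtain ⟨h, hmono, htop, hnonneg, hsum⟩ := exists_monotone_tendsto_atTop_summable_mul_of_pos
    (fun n => add_pos_of_nonneg_of_pos (ha n) (pow_pos one_half_pos n))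
    (hs.add summable_geometric_two)
  refine ⟨h, hmono, htop, hnonneg, hsum.of_nonneg_of_le (fun n => mul_nonneg (hnonneg n) (ha n))
    fun n => mul_le_mul_of_nonneg_left ?_ (hnonneg n)⟩
  exact le_add_of_nonneg_right (by positivity)

theorem exists_monotone_tendsto_atTop_summable_mul_rpow {b : ℕ → ℝ} {r : ℝ} (hr : 0 < r)
    (hb : ∀ n, 0 ≤ b n) (hs : Summable fun n => b n ^ r) :
    ∃ h : ℕ → ℝ, Monotone h ∧ Tendsto h atTop atTop ∧ (∀ n, 0 ≤ h n) ∧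
      Summable fun n => (h n * b n) ^ r := by
  obtain ⟨h, hmono, htop, hnonneg, hsum⟩ :=
    exists_monotone_tendsto_atTop_summable_mul (fun n => Real.rpow_nonneg (hb n) r) hs
  refine ⟨fun n => h n ^ r⁻¹, fun m n hmn => ?_, (tendsto_rpow_atTop (inv_pos.2 hr)).comp htop,
    fun n => Real.rpow_nonneg (hnonneg n) _, ?_⟩
  · exact Real.rpow_le_rpow (hnonneg m) (hmono hmn) (inv_pos.2 hr).le
  · simpa only [Real.mul_rpow (Real.rpow_nonneg (hnonneg _) _) (hb _),
      Real.rpow_inv_rpow (hnonneg _) hr.ne'] using hsum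

end SlowGrowth

section SequenceSpace

variable {E : ℕ → Type*} [∀ n, NormedAddCommGroup (E n)] {p : ℝ≥0∞}

theorem lp_norm_rpow_le_tsum_nat_add (hp : 0 < p.toReal) {f : lp E p} {g : ℕ → ℝ} {N : ℕ}
    (hg : Summable fun u => g u ^ p.toReal) (hf : ∀ u < N, f u = 0)
    (hfg : ∀ u, N ≤ u → ‖f u‖ ≤ g u) :
    ‖f‖ ^ p.toReal ≤ ∑' u, g (u + N) ^ p.toReal := by
  have hsum : Summable fun u => ‖f u‖ ^ p.toReal := (memℓp_gen_iff hp).1 (lp.memℓp f)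
  have hhead : ∑ u ∈ Finset.range N, ‖f u‖ ^ p.toReal = 0 :=
    Finset.sum_eq_zero fun u hu => by
      rw [hf u (Finset.mem_range.1 hu), norm_zero, Real.zero_rpow hp.ne']
  rw [lp.norm_rpow_eq_tsum hp, ← hsum.sum_add_tsum_nat_add N, hhead, zero_add]
  refine ((summable_nat_add_iff N).2 hsum).tsum_le_tsum (fun u => ?_)
    ((summable_nat_add_iff (f := fun u => g u ^ p.toReal) N).2 hg)
  exact Real.rpow_le_rpow (norm_nonneg _) (hfg _ (Nat.le_add_left N u)) hp.le

theorem exists_countable_dense_eventually_zero [∀ n, TopologicalSpace.SeparableSpace (E n)]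
    [Fact (1 ≤ p)] (hp : p ≠ ⊤) :
    ∃ c : Set (lp E p), c.Countable ∧ Dense c ∧ ∀ y ∈ c, ∃ q, ∀ u, q ≤ u → y u = 0 := by
  let trunc (n : ℕ) (a : ∀ t : Fin n, E t) : lp E p := ∑ t : Fin n, lp.single p (t : ℕ) (a t)
  have htrunc_cont (n : ℕ) : Continuous (trunc n) := continuous_finsetSum _ fun t _ =>
    (lp.isometry_single (t : ℕ)).continuous.comp (continuous_apply t)
  have hsep : TopologicalSpace.IsSeparable (⋃ n, Set.range (trunc n)) :=
    .iUnion fun n => TopologicalSpace.isSeparable_range (htrunc_cont n)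
  obtain ⟨c, hc_sub, hc_count, hc_dense⟩ := hsep.exists_countable_dense_subset
  refine ⟨c, hc_count, ?_, fun y hy => ?_⟩
  · refine Dense.of_closure (s := c) (dense_iff_closure_eq.2 (Set.eq_univ_of_forall fun f => ?_))
    refine closure_mono hc_dense (mem_closure_of_tendsto (lp.hasSum_single hp f).tendsto_sum_nat
      (Eventually.of_forall fun n => Set.mem_iUnion.2 ⟨n, fun t => f t, ?_⟩))
    exact (Finset.sum_range fun t => lp.single p t (f t)).symm
  · obtain ⟨q, a, rfl⟩ := Set.mem_iUnion.1 (hc_sub hy)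
    refine ⟨q, fun u hu => ?_⟩
    rw [lp.coeFn_sum, Finset.sum_apply]
    exact Finset.sum_eq_zero fun t _ => lp.single_apply_ne p _ _ (t.2.trans_le hu).ne'

end SequenceSpace

theorem exists_seq_forall_frequently_eq (α : Type*) [Countable α] [Nonempty α] :
    ∃ e : ℕ → α, ∀ a, ∃ᶠ n in atTop, e n = a := by
  obtain ⟨f, hf⟩ := exists_surjective_nat α
  refine ⟨fun n => f n.unpair.1, fun a => frequently_atTop.2 fun m => ?_⟩
  obtain ⟨k, rfl⟩ := hf a
  exact ⟨Nat.pair k m, Nat.right_le_pair k m, by simp only [Nat.unpair_pair]⟩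

section LayOut

variable {β : Type*} [Zero β] {A : ℕ → Set ℕ} {N : ℕ → ℕ} {κ : ℕ}

/-- The sequence carrying the word `g s n 0, …, g s n (N s - 1)` at the positions
`n, …, n + N s - 1`, for all `s` and `n ∈ A s`, and zeros elsewhere. It is meaningful when these
windows are disjoint, as they are for well-separated sets. -/
noncomputable def layOut (A : ℕ → Set ℕ) (N : ℕ → ℕ) (g : ℕ → ℕ → ℕ → β) : ℕ → β :=
  Function.extend (fun z : {z : ℕ × ℕ × ℕ // z.2.1 ∈ A z.1 ∧ z.2.2 < N z.1} => z.1.2.1 + z.1.2.2)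
    (fun z => g z.1.1 z.1.2.1 z.1.2.2) 0

theorem exists_of_layOut_ne_zero {g : ℕ → ℕ → ℕ → β} {k : ℕ} (hk : layOut A N g k ≠ 0) :
    ∃ s, ∃ n ∈ A s, ∃ t < N s, k = n + t := by
  contrapose! hk
  refine Function.extend_apply' _ _ _ ?_
  rintro ⟨⟨z, hz, ht⟩, rfl⟩
  exact hk z.1 z.2.1 hz z.2.2 ht rfl

theorem WellSeparated.layOut_add (hA : WellSeparated N κ A) (g : ℕ → ℕ → ℕ → β) {s n t : ℕ}
    (hn : n ∈ A s) (ht : t < N s) : layOut A N g (n + t) = g s n t := by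
  refine Function.Injective.extend_apply (f := fun z : {z : ℕ × ℕ × ℕ // z.2.1 ∈ A z.1 ∧
    z.2.2 < N z.1} => z.1.2.1 + z.1.2.2) ?_ _ _ ⟨(s, n, t), hn, ht⟩
  rintro ⟨⟨r, n, t⟩, hn, ht⟩ ⟨⟨s, m, u⟩, hm, hu⟩ (heq : n + t = m + u)
  dsimp only at hn ht hm hu
  rcases lt_trichotomy n m with hnm | rfl | hmn
  · have := hA.add_max_le hn hm hnm
    omega
  · rw [Subtype.mk.injEq, hA.index_eq hn hm, add_left_cancel heq]
  · have := hA.add_max_le hm hn hmn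
    omega

end LayOut

section WeightedShift

variable {𝕜 ι : Type*} [NormedField 𝕜] {p : ℝ≥0∞} [Fact (1 ≤ p)]

/-- `B` is the weighted backward shift `B_w` on `ℓ^p`; the value `w 0` is irrelevant. -/
def IsWeightedBackwardShift (w : ℕ → 𝕜) (B : lp (fun _ : ℕ => 𝕜) p →L[𝕜] lp (fun _ : ℕ => 𝕜) p) :
    Prop :=
  ∀ (x : lp (fun _ : ℕ => 𝕜) p) (n : ℕ), (B x) n = w (n + 1) * x (n + 1)

theorem IsWeightedBackwardShift.pow_apply {w : ℕ → 𝕜}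
    {B : lp (fun _ : ℕ => 𝕜) p →L[𝕜] lp (fun _ : ℕ => 𝕜) p} (hB : IsWeightedBackwardShift w B)
    (x : lp (fun _ : ℕ => 𝕜) p) (n u : ℕ) :
    ((B ^ n) x) u = (∏ l ∈ Finset.Ioc u (u + n), w l) * x (u + n) := by
  induction n generalizing u with
  | zero => simp
  | succ n ih =>
    rw [pow_succ', mul_apply_eq_comp, hB, ih, ← mul_assoc, ← add_right_comm, ← add_assoc,
      ← Finset.prod_Ioc_consecutive w u.le_succ (by omega : u + 1 ≤ u + n + 1),
      Nat.Ioc_succ_singleton, Finset.prod_singleton]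

/-- Let `S j` be the formal right inverse of the shift of weights `w j`. The quotient below is the
only nonzero coordinate, at `u`, of the image of `e_t` under `u + n - t` steps of `S j` followed
by `n` steps of the shift of weights `w i`. It is required to be dominated by `c j t * b u` when `u`
is at least `d` beyond `t` and either `i = j` or `n ≥ d` and `u - t ≥ κ * n`. -/
def DominatesOrbits (w : ι → ℕ → 𝕜) (c : ι → ℕ → ℝ) (b : ℕ → ℝ) (d κ : ℕ) : Prop :=
  ∀ i j t u n, t + d ≤ u → (i = j ∨ d ≤ n ∧ t + κ * n ≤ u) →
    ‖(∏ l ∈ Finset.Ioc u (u + n), w i l) / ∏ l ∈ Finset.Ioc t (u + n), w j l‖ ≤ c j t * b u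

/-- The sum over all `s` and `m ∈ A s` of the preimages of the words `y s` under `m` steps of the
shift of weights `w (ix s)`. -/
noncomputable def gluedVector (w : ι → ℕ → 𝕜) (ix : ℕ → ι) (y : ℕ → ℕ → 𝕜) (A : ℕ → Set ℕ)
    (N : ℕ → ℕ) : ℕ → 𝕜 :=
  layOut A N fun s m t => y s t / ∏ l ∈ Finset.Ioc t (m + t), w (ix s) l

variable {w : ι → ℕ → 𝕜} {c : ι → ℕ → ℝ} {b h : ℕ → ℝ} {d κ : ℕ} {ix : ℕ → ι} {y : ℕ → ℕ → 𝕜}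
  {A : ℕ → Set ℕ} {N : ℕ → ℕ}

/-- The conditions under which the iterates of `gluedVector w ix y A N` at the times in `A s`
approximate the word `y s`: the words fit in their windows, the windows are well separated, and
the coefficients of `y s` are controlled by the slowly growing function `h` at `N s`. -/
structure GluingData (c : ι → ℕ → ℝ) (h : ℕ → ℝ) (d κ : ℕ) (ix : ℕ → ι) (y : ℕ → ℕ → 𝕜)
    (A : ℕ → Set ℕ) (N : ℕ → ℕ) : Prop where
  wellSeparated : WellSeparated N κ A
  monotone : Monotone h
  nonneg : ∀ u, 0 ≤ h u
  le_length : ∀ s, d ≤ N s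
  eq_zero_of_le : ∀ s u, N s ≤ u → y s u = 0
  norm_mul_le : ∀ s t, ‖y s t‖ * c (ix s) t ≤ h (N s)

theorem exists_gluingData (c : ι → ℕ → ℝ) (d κ : ℕ) (ix : ℕ → ι) (hmono : Monotone h)
    (htop : Tendsto h atTop atTop) (hnonneg : ∀ u, 0 ≤ h u)
    (hy : ∀ s, ∃ q, ∀ u, q ≤ u → y s u = 0) :
    ∃ A N, GluingData c h d κ ix y A N ∧ (∀ s, s ≤ N s) ∧ ∀ s, 0 < lowerDensity (A s) := by
  choose q hq using hy
  have hlength (s : ℕ) : ∃ N, 0 < N ∧ d ≤ N ∧ s ≤ N ∧ q s ≤ N ∧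
      ∀ t ∈ Finset.range (q s), ‖y s t‖ * c (ix s) t ≤ h N :=
    ((eventually_gt_atTop 0).and <| (eventually_ge_atTop d).and <| (eventually_ge_atTop s).and <|
      (eventually_ge_atTop (q s)).and <| (Finset.range (q s)).eventually_all.2 fun t _ =>
        htop.eventually_ge_atTop _).exists
  choose N hpos hd hs hqN hbound using hlength
  obtain ⟨A, hA, hA_density⟩ := exists_wellSeparated_lowerDensity_pos κ hpos
  refine ⟨A, N, ⟨hA, hmono, hnonneg, hd, fun s u hu => hq s u ((hqN s).trans hu), fun s t => ?_⟩,
    hs, hA_density⟩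
  rcases lt_or_ge t (q s) with ht | ht
  · exact hbound s t (Finset.mem_range.2 ht)
  · rw [hq s t ht, norm_zero, zero_mul]
    exact hnonneg _

theorem WellSeparated.prod_mul_gluedVector (hA : WellSeparated N κ A)
    (hw : ∀ i l, 1 ≤ l → w i l ≠ 0) {s n u : ℕ} (hn : n ∈ A s) (hu : u < N s) :
    (∏ l ∈ Finset.Ioc u (u + n), w (ix s) l) * gluedVector w ix y A N (u + n) = y s u := by
  have hprod : ∏ l ∈ Finset.Ioc u (u + n), w (ix s) l ≠ 0 := Finset.prod_ne_zero_iff.2 fun l hl =>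
    hw _ l (Nat.one_le_of_lt (Finset.mem_Ioc.1 hl).1)
  rw [gluedVector, add_comm u n, hA.layOut_add _ hn hu, add_comm n u, mul_div_cancel₀ _ hprod]

namespace GluingData

theorem norm_prod_mul_gluedVector_le (hG : GluingData c h d κ ix y A N)
    (hdom : DominatesOrbits w c b d κ) (hb : ∀ u, 0 ≤ b u) {i : ι} {r m t u n : ℕ} (hm : m ∈ A r)
    (ht : t < N r) (hut : u + n = m + t) (hnm : n + N r ≤ m)
    (hgap : i = ix r ∨ d ≤ n ∧ n + κ * n ≤ m) :
    ‖(∏ l ∈ Finset.Ioc u (u + n), w i l) * gluedVector w ix y A N (u + n)‖ ≤ h u * b u := by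
  have htu : t + d ≤ u := by have := hG.le_length r; omega
  have hquot := hdom i (ix r) t u n htu (hgap.imp_right (And.imp_right (by omega)))
  rw [hut] at hquot ⊢
  calc ‖(∏ l ∈ Finset.Ioc u (m + t), w i l) * gluedVector w ix y A N (m + t)‖
      = ‖y r t‖ * ‖(∏ l ∈ Finset.Ioc u (m + t), w i l) /
          ∏ l ∈ Finset.Ioc t (m + t), w (ix r) l‖ := by
        rw [gluedVector, hG.wellSeparated.layOut_add _ hm ht, ← norm_mul, mul_div_left_comm]
    _ ≤ ‖y r t‖ * (c (ix r) t * b u) := mul_le_mul_of_nonneg_left hquot (norm_nonneg _)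
    _ = ‖y r t‖ * c (ix r) t * b u := (mul_assoc _ _ _).symm
    _ ≤ h u * b u :=
        mul_le_mul_of_nonneg_right ((hG.norm_mul_le r t).trans (hG.monotone (by omega))) (hb u)

theorem norm_gluedVector_le (hG : GluingData c h d κ ix y A N) (hdom : DominatesOrbits w c b d κ)
    (hb : ∀ u, 0 ≤ b u) (u : ℕ) : ‖gluedVector w ix y A N u‖ ≤ h u * b u := by
  by_cases hzero : gluedVector w ix y A N u = 0
  · rw [hzero, norm_zero]
    exact mul_nonneg (hG.nonneg u) (hb u)
  obtain ⟨r, m, hm, t, ht, hut⟩ := exists_of_layOut_ne_zero hzero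
  have hNm : 0 + N r ≤ m := (zero_add _).trans_le (hG.wellSeparated.le_of_mem hm)
  simpa using hG.norm_prod_mul_gluedVector_le (n := 0) hdom hb hm ht hut hNm (.inl rfl)

theorem norm_prod_mul_gluedVector_le_of_mem (hG : GluingData c h d κ ix y A N)
    (hdom : DominatesOrbits w c b d κ) (hb : ∀ u, 0 ≤ b u) {s n u : ℕ} (hn : n ∈ A s)
    (hu : N s ≤ u) :
    ‖(∏ l ∈ Finset.Ioc u (u + n), w (ix s) l) * gluedVector w ix y A N (u + n)‖ ≤ h u * b u := by
  have hA := hG.wellSeparated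
  by_cases hzero : gluedVector w ix y A N (u + n) = 0
  · rw [hzero, mul_zero, norm_zero]
    exact mul_nonneg (hG.nonneg u) (hb u)
  obtain ⟨r, m, hm, t, ht, hut⟩ := exists_of_layOut_ne_zero hzero
  have hnm : n < m := by
    rcases lt_trichotomy n m with hlt | rfl | hgt
    · exact hlt
    · rw [hA.index_eq hn hm] at hu
      omega
    · have := hA.add_max_le hm hn hgt
      omega
  refine hG.norm_prod_mul_gluedVector_le hdom hb hm ht hut ?_ ?_
  · exact (Nat.add_le_add_left (le_max_right _ _) n).trans (hA.add_max_le hn hm hnm)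
  · rcases eq_or_ne s r with rfl | hsr
    · exact .inl rfl
    · exact .inr ⟨(hG.le_length s).trans (hA.le_of_mem hn), hA.add_mul_le hn hm hnm hsr⟩

theorem norm_pow_sub_rpow_le (hG : GluingData c h d κ ix y A N) (hdom : DominatesOrbits w c b d κ)
    (hb : ∀ u, 0 ≤ b u) (hw : ∀ i l, 1 ≤ l → w i l ≠ 0) (hp : 0 < p.toReal)
    (hsum : Summable fun u => (h u * b u) ^ p.toReal) {s n : ℕ} (hn : n ∈ A s)
    {B : lp (fun _ : ℕ => 𝕜) p →L[𝕜] lp (fun _ : ℕ => 𝕜) p}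
    (hB : IsWeightedBackwardShift (w (ix s)) B) {x z : lp (fun _ : ℕ => 𝕜) p}
    (hx : x = gluedVector w ix y A N) (hz : z = y s) :
    ‖(B ^ n) x - z‖ ^ p.toReal ≤ ∑' u, (h (u + N s) * b (u + N s)) ^ p.toReal := by
  have hcoord (u : ℕ) : ((B ^ n) x - z : lp (fun _ : ℕ => 𝕜) p) u =
      (∏ l ∈ Finset.Ioc u (u + n), w (ix s) l) * gluedVector w ix y A N (u + n) - y s u := by
    rw [lp.coeFn_sub, Pi.sub_apply, hB.pow_apply, hx, hz]
  refine lp_norm_rpow_le_tsum_nat_add (g := fun u => h u * b u) hp hsum (fun u hu => ?_)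
    fun u hu => ?_
  · rw [hcoord, hG.wellSeparated.prod_mul_gluedVector hw hn hu, sub_self]
  · rw [hcoord, hG.eq_zero_of_le s u hu, sub_zero]
    exact hG.norm_prod_mul_gluedVector_le_of_mem hdom hb hn hu

end GluingData

theorem DominatesOrbits.exists_common_frequentlyHypercyclic [Countable ι]
    [TopologicalSpace.SeparableSpace 𝕜] (hp : p ≠ ⊤)
    {B : ι → lp (fun _ : ℕ => 𝕜) p →L[𝕜] lp (fun _ : ℕ => 𝕜) p}
    (hB : ∀ i, IsWeightedBackwardShift (w i) (B i)) (hw : ∀ i l, 1 ≤ l → w i l ≠ 0)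
    (hdom : DominatesOrbits w c b d κ) (hb : ∀ u, 0 ≤ b u)
    (hsum : Summable fun u => b u ^ p.toReal) :
    ∃ x, ∀ i, x ∈ frequentlyHypercyclicVectors (B i) := by
  rcases isEmpty_or_nonempty ι with _ | _
  · exact ⟨0, isEmptyElim⟩
  have hp_pos : 0 < p.toReal := ENNReal.toReal_pos (zero_lt_one.trans_le Fact.out).ne' hp
  obtain ⟨h, hmono, htop, hnonneg, hhb⟩ :=
    exists_monotone_tendsto_atTop_summable_mul_rpow hp_pos hb hsum
  obtain ⟨D, hD_count, hD_dense, hD_zero⟩ :=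
    exists_countable_dense_eventually_zero (E := fun _ => 𝕜) hp
  have := hD_count.to_subtype
  have := hD_dense.nonempty.to_subtype
  obtain ⟨e, he⟩ := exists_seq_forall_frequently_eq (ι × D)
  obtain ⟨A, N, hG, hsN, hA_density⟩ := exists_gluingData (y := fun s => (e s).2.1) c d κ
    (fun s => (e s).1) hmono htop hnonneg fun s => hD_zero _ (e s).2.2
  have hx : Memℓp (gluedVector w (fun s => (e s).1) (fun s => (e s).2.1) A N) p :=
    memℓp_gen (hhb.of_nonneg_of_le (fun u => by positivity) fun u =>
      Real.rpow_le_rpow (norm_nonneg _) (hG.norm_gluedVector_le hdom hb u) hp_pos.le)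
  refine ⟨⟨_, hx⟩, fun i => mem_frequentlyHypercyclicVectors_of_dense hD_dense fun z hz ε hε => ?_⟩
  have htail : ∀ᶠ s in atTop, ∑' u, (h (u + N s) * b (u + N s)) ^ p.toReal < ε ^ p.toReal :=
    (tendsto_atTop_mono hsN tendsto_id).eventually <|
      (tendsto_sum_nat_add fun u => (h u * b u) ^ p.toReal).eventually_lt_const
        (Real.rpow_pos_of_pos hε _)
  obtain ⟨s, hs, hs_tail⟩ := ((he (i, ⟨z, hz⟩)).and_eventually htail).exists
  refine ⟨A s, hA_density s, fun n hn => ?_⟩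
  have hBs : IsWeightedBackwardShift (w (e s).1) (B i) := by rw [hs]; exact hB i
  have hzs : (z : ℕ → 𝕜) = (e s).2.1 := by rw [hs]
  rw [dist_eq_norm, ← Real.rpow_lt_rpow_iff (norm_nonneg _) hε.le hp_pos]
  exact (hG.norm_pow_sub_rpow_le hdom hb hw hp_pos hhb hn hBs rfl hzs).trans_lt hs_tail

end WeightedShift

section Weights

theorem exists_pow_mul_le_one {η : ℝ} (hη0 : 0 ≤ η) (hη1 : η < 1) (a : ℝ) :
    ∃ κ : ℕ, η ^ κ * a ≤ 1 := by
  have hlim : Tendsto (fun κ : ℕ => η ^ κ * a) atTop (𝓝 0) := by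
    simpa using (tendsto_pow_atTop_nhds_zero_of_lt_one hη0 hη1).mul_const a
  exact (hlim.eventually_le_const one_pos).exists

theorem mul_pow_le_sq_mul {X Y M η C : ℝ} {κ n k : ℕ} (hM : 0 < M) (hη0 : 0 ≤ η) (hη1 : η ≤ 1)
    (hC : 0 < C) (hκ : η ^ κ * M ^ 2 ≤ 1) (hX : X ≤ C * M ^ n) (hY : C⁻¹ / M ^ n ≤ Y)
    (hk : κ * n ≤ k) : X * η ^ k ≤ C ^ 2 * Y := by
  have hY_pos : 0 ≤ Y := hY.trans' (by positivity)
  have hone : 1 ≤ C * M ^ n * Y := by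
    rwa [inv_eq_one_div, div_div, div_le_iff₀' (by positivity)] at hY
  calc X * η ^ k ≤ C * M ^ n * η ^ (κ * n) :=
        mul_le_mul hX (pow_le_pow_of_le_one hη0 hη1 hk) (by positivity) (by positivity)
    _ ≤ C * M ^ n * η ^ (κ * n) * (C * M ^ n * Y) := le_mul_of_one_le_right (by positivity) hone
    _ = C ^ 2 * Y * (η ^ κ * M ^ 2) ^ n := by rw [mul_pow, ← pow_mul, ← pow_mul]; ring
    _ ≤ C ^ 2 * Y := mul_le_of_le_one_right (by positivity) (pow_le_one₀ (by positivity) hκ)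

theorem div_mul_le_div_mul_mul_inv {X Y Z O T e η C D : ℝ} (hY : 0 < Y) (hZ : 0 < Z) (hO : 0 < O)
    (hT : 0 < T) (hη : 0 < η) (hX : 0 ≤ X) (hC : 0 ≤ C) (hXY : X * e ≤ D * Y)
    (hOZ : O * η ≤ C * e * Z) : X / (Z * Y) ≤ C * D / η * T * (T * O)⁻¹ := by
  have hcancel : C * D / η * T * (T * O)⁻¹ = C * D / (O * η) := by field_simp
  rw [hcancel, div_le_div_iff₀ (by positivity) (by positivity)]
  calc X * (O * η) ≤ X * (C * e * Z) := mul_le_mul_of_nonneg_left hOZ hX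
    _ = C * Z * (X * e) := by ring
    _ ≤ C * Z * (D * Y) := mul_le_mul_of_nonneg_left hXY (by positivity)
    _ = C * D * (Z * Y) := by ring

theorem Ioc_eq_Icc_add {a b : ℕ} (h : a < b) :
    Finset.Ioc a b = Finset.Icc (a + 1) (a + 1 + (b - a - 1)) := by
  ext l
  simp only [Finset.mem_Ioc, Finset.mem_Icc]
  omega

theorem prod_Ioc_mul_le_of_prod_Icc_le {a b : ℕ → ℝ} {η C : ℝ} (hη : 0 ≤ η)
    (hab : ∀ n m, 1 ≤ n → 1 ≤ m →
      ∏ l ∈ Finset.Icc n (n + m), a l ≤ C * η ^ m * ∏ l ∈ Finset.Icc n (n + m), b l)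
    {t u : ℕ} (htu : t + 2 ≤ u) :
    (∏ l ∈ Finset.Ioc t u, a l) * η ≤ C * η ^ (u - t) * ∏ l ∈ Finset.Ioc t u, b l := by
  have hexp : u - t = u - t - 1 + 1 := by omega
  rw [Ioc_eq_Icc_add (by omega : t < u), hexp, pow_succ, ← hexp]
  calc _ ≤ _ * η := mul_le_mul_of_nonneg_right (hab (t + 1) (u - t - 1) (by omega) (by omega)) hη
    _ = _ := by ring

theorem prod_Ioc_mul_pow_le_of_prod_Icc_bounds {a b : ℕ → ℝ} {M η C : ℝ} {κ : ℕ} (hM : 0 < M)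
    (hη0 : 0 ≤ η) (hη1 : η ≤ 1) (hC : 0 < C) (hκ : η ^ κ * M ^ 2 ≤ 1)
    (ha : ∀ n m, 1 ≤ n → 1 ≤ m → ∏ l ∈ Finset.Icc n (n + m), a l ≤ C * M ^ m)
    (hb : ∀ n m, 1 ≤ n → 1 ≤ m → C⁻¹ / M ^ m ≤ ∏ l ∈ Finset.Icc n (n + m), b l)
    {u n k : ℕ} (hn : 2 ≤ n) (hk : κ * n ≤ k) :
    (∏ l ∈ Finset.Ioc u (u + n), a l) * η ^ k ≤ C ^ 2 * ∏ l ∈ Finset.Ioc u (u + n), b l := by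
  have hlen : u + n - u - 1 ≤ n := by omega
  rw [Ioc_eq_Icc_add (by omega : u < u + n)]
  exact mul_pow_le_sq_mul hM hη0 hη1 hC hκ (ha _ _ (by omega) (by omega))
    (hb _ _ (by omega) (by omega)) ((Nat.mul_le_mul_left κ hlen).trans hk)

variable {ι 𝕜 : Type*} [NormedField 𝕜] {w : ι → ℕ → 𝕜} {ω : ℕ → 𝕜} {M η C : ℝ} {κ : ℕ}

theorem ne_zero_of_prod_Icc_bound (hM : 0 < M) (hC : 0 < C)
    (hlow : ∀ i n m, 1 ≤ n → 1 ≤ m → C⁻¹ / M ^ m ≤ ∏ j ∈ Finset.Icc n (n + m), ‖w i j‖)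
    {i : ι} {n : ℕ} (hn : 1 ≤ n) : w i n ≠ 0 := by
  have hpos : 0 < ∏ j ∈ Finset.Icc n (n + 1), ‖w i j‖ :=
    (hlow i n 1 hn le_rfl).trans_lt' (by positivity)
  exact norm_ne_zero_iff.1 (Finset.prod_ne_zero_iff.1 hpos.ne' n (by simp))

theorem dominatesOrbits_of_prod_Icc_bounds (hω0 : ∀ n, 1 ≤ n → ω n ≠ 0) (hM : 0 < M) (hη0 : 0 < η)
    (hη1 : η ≤ 1) (hC : 0 < C) (hκ : η ^ κ * M ^ 2 ≤ 1)
    (hωw : ∀ i n m, 1 ≤ n → 1 ≤ m → ∏ j ∈ Finset.Icc n (n + m), ‖ω j‖ ≤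
      C * η ^ m * ∏ j ∈ Finset.Icc n (n + m), ‖w i j‖)
    (hw : ∀ i n m, 1 ≤ n → 1 ≤ m → C⁻¹ / M ^ m ≤ ∏ j ∈ Finset.Icc n (n + m), ‖w i j‖ ∧
      ∏ j ∈ Finset.Icc n (n + m), ‖w i j‖ ≤ C * M ^ m) :
    DominatesOrbits w (fun _ t => C * (1 + C ^ 2) / η * ∏ j ∈ Finset.Icc 1 t, ‖ω j‖)
      (fun u => (∏ j ∈ Finset.Icc 1 u, ‖ω j‖)⁻¹) 2 κ := by
  intro i j t u n htu hgap
  have hw_pos (j : ι) (a b : ℕ) : 0 < ∏ l ∈ Finset.Ioc a b, ‖w j l‖ := Finset.prod_pos fun l hl =>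
    norm_pos_iff.2 (ne_zero_of_prod_Icc_bound hM hC (fun i n m hn hm => (hw i n m hn hm).1)
      (Nat.one_le_of_lt (Finset.mem_Ioc.1 hl).1))
  have hω_pos (a b : ℕ) : 0 < ∏ l ∈ Finset.Ioc a b, ‖ω l‖ := Finset.prod_pos fun l hl =>
    norm_pos_iff.2 (hω0 l (Nat.one_le_of_lt (Finset.mem_Ioc.1 hl).1))
  have hchange : (∏ l ∈ Finset.Ioc u (u + n), ‖w i l‖) * η ^ (u - t) ≤
      (1 + C ^ 2) * ∏ l ∈ Finset.Ioc u (u + n), ‖w j l‖ := by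
    rw [one_add_mul]
    rcases hgap with rfl | ⟨hn, hκn⟩
    · exact le_add_of_le_of_nonneg
        (mul_le_of_le_one_right (hw_pos _ _ _).le (pow_le_one₀ hη0.le hη1))
        (mul_nonneg (sq_nonneg C) (hw_pos _ _ _).le)
    · exact le_add_of_nonneg_of_le (hw_pos _ _ _).le <|
        prod_Ioc_mul_pow_le_of_prod_Icc_bounds hM hη0.le hη1 hC hκ (fun n m hn hm =>
          (hw i n m hn hm).2) (fun n m hn hm => (hw j n m hn hm).1) hn (by omega)
  have hcompare := prod_Ioc_mul_le_of_prod_Icc_le hη0.le (hωw j) htu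
  have hIcc (k : ℕ) : Finset.Icc 1 k = Finset.Ioc 0 k := rfl
  simp only [hIcc]
  rw [norm_div, norm_prod, norm_prod,
    ← Finset.prod_Ioc_consecutive (fun l => ‖w j l‖) (by omega : t ≤ u) (by omega : u ≤ u + n),
    ← Finset.prod_Ioc_consecutive (fun l => ‖ω l‖) t.zero_le (by omega : t ≤ u)]
  exact div_mul_le_div_mul_mul_inv (hw_pos _ _ _) (hw_pos _ _ _) (hω_pos _ _) (hω_pos _ _) hη0
    (hw_pos _ _ _).le hC.le hchange hcompare

end Weights

theorem stmt8_general {ι 𝕜 : Type*} [Countable ι] [NormedField 𝕜]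
    [TopologicalSpace.SeparableSpace 𝕜] {p : ℝ≥0∞} [Fact (1 ≤ p)] (hp : p ≠ ⊤) (w : ι → ℕ → 𝕜)
    (B : ι → lp (fun _ : ℕ => 𝕜) p →L[𝕜] lp (fun _ : ℕ => 𝕜) p)
    (hB : ∀ i, IsWeightedBackwardShift (w i) (B i))
    (ω : ℕ → 𝕜) (hω0 : ∀ n, 1 ≤ n → ω n ≠ 0) (M η C : ℝ) (hM : 0 < M) (hη0 : 0 < η) (hη1 : η ≤ 1)
    (hMη : M = 1 ∨ η ≠ 1) (hC : 0 < C)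
    (hi : Summable fun k : ℕ => (∏ j ∈ Finset.Icc 1 k, ‖ω j‖) ^ (-p.toReal))
    (hii : ∀ i n m, 1 ≤ n → 1 ≤ m → ∏ j ∈ Finset.Icc n (n + m), ‖ω j‖ ≤
      C * η ^ m * ∏ j ∈ Finset.Icc n (n + m), ‖w i j‖)
    (hiii : ∀ i n m, 1 ≤ n → 1 ≤ m → C⁻¹ / M ^ m ≤ ∏ j ∈ Finset.Icc n (n + m), ‖w i j‖ ∧
      ∏ j ∈ Finset.Icc n (n + m), ‖w i j‖ ≤ C * M ^ m) :
    ∃ x, ∀ i, x ∈ frequentlyHypercyclicVectors (B i) := by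
  have hw0 (i : ι) (l : ℕ) (hl : 1 ≤ l) : w i l ≠ 0 :=
    ne_zero_of_prod_Icc_bound hM hC (fun i n m hn hm => (hiii i n m hn hm).1) hl
  have hκ : ∃ κ : ℕ, η ^ κ * M ^ 2 ≤ 1 := by
    rcases hMη with rfl | hη
    · exact ⟨0, by norm_num⟩
    · exact exists_pow_mul_le_one hη0.le (hη1.lt_of_ne hη) _
  obtain ⟨κ, hκ⟩ := hκ
  have hΩ (k : ℕ) : 0 ≤ ∏ j ∈ Finset.Icc 1 k, ‖ω j‖ := Finset.prod_nonneg fun _ _ => norm_nonneg _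
  exact DominatesOrbits.exists_common_frequentlyHypercyclic hp hB hw0
    (dominatesOrbits_of_prod_Icc_bounds hω0 hM hη0 hη1 hC hκ hii hiii)
    (fun u => inv_nonneg.2 (hΩ u)) <|
    hi.congr fun u => by rw [Real.rpow_neg (hΩ u), Real.inv_rpow (hΩ u)]

/-- Theorem 2.18 (common frequent hypercyclicity for countably many weighted shifts
on `ℓ^p(ℕ)`, `1 ≤ p < ∞`). The weighted backward shift `B_{w(i)}` is encoded as the
bounded operator `B i` whose action is `(B i x) n = w i (n+1) * x (n+1)`. -/
theorem stmt8 (p : ℝ≥0∞) [Fact (1 ≤ p)] (hp : p ≠ ⊤)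
    (w : ℕ → ℕ → ℂ) (hw0 : ∀ i n : ℕ, 1 ≤ n → w i n ≠ 0)
    (hwbdd : ∀ i : ℕ, ∃ A : ℝ, ∀ n : ℕ, ‖w i n‖ ≤ A)
    (B : ℕ → lp (fun _ : ℕ => ℂ) p →L[ℂ] lp (fun _ : ℕ => ℂ) p)
    (hB : ∀ i : ℕ, ∀ x : lp (fun _ : ℕ => ℂ) p, ∀ n : ℕ,
      (B i x) n = w i (n + 1) * x (n + 1))
    (ω : ℕ → ℂ) (hω0 : ∀ n : ℕ, 1 ≤ n → ω n ≠ 0)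
    (M η C : ℝ) (hM : 1 ≤ M) (hη0 : 0 < η) (hη1 : η ≤ 1)
    (hMη : (M = 1 ∧ η = 1) ∨ (M ≠ 1 ∧ η ≠ 1)) (hC : 0 < C)
    -- (i) ∑_{k≥1} |ω₁⋯ω_k|^{-p} < ∞
    (hi : Summable (fun k : ℕ => (∏ j ∈ Finset.Icc 1 k, ‖ω j‖) ^ (-(p.toReal))))
    -- (ii) |ω_n⋯ω_{n+m}| ≤ C η^m |w_n(i)⋯w_{n+m}(i)|
    (hii : ∀ i n m : ℕ, 1 ≤ n → 1 ≤ m →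
      ∏ j ∈ Finset.Icc n (n + m), ‖ω j‖ ≤
        C * η ^ m * ∏ j ∈ Finset.Icc n (n + m), ‖w i j‖)
    -- (iii) C⁻¹ M^{-m} ≤ |w_n(i)⋯w_{n+m}(i)| ≤ C M^m
    (hiii : ∀ i n m : ℕ, 1 ≤ n → 1 ≤ m →
      C⁻¹ / M ^ m ≤ ∏ j ∈ Finset.Icc n (n + m), ‖w i j‖ ∧
        ∏ j ∈ Finset.Icc n (n + m), ‖w i j‖ ≤ C * M ^ m) :
    ∃ x : lp (fun _ : ℕ => ℂ) p, ∀ i : ℕ,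
      ∀ U : Set (lp (fun _ : ℕ => ℂ) p), IsOpen U → U.Nonempty →
        0 < lowerDensity {n : ℕ | ((B i) ^ n) x ∈ U} :=
  stmt8_general hp w B hB ω hω0 M η C (zero_lt_one.trans_le hM) hη0 hη1 (hMη.imp And.left And.right)
    hC hi hii hiii
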